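/- Let A be a Noetherian ring and m a maximal ideal of A such that A/m is algebraically closed of characteristic 0. Let I be an m-primary ideal of A and let J be a minimal reduction of I. Then J + I_> = *J. -/

import Mathlib

open Filter Polynomial

/-- An element `b` is weakly subintegral over a subset (subring) `R` of `B`:
there are `q ≥ 0` and `a_i ∈ R` (`1 ≤ i ≤ 2q+1`) with
`b^n + ∑_{i=1}^n (n choose i) a_i b^{n-i} = 0` for `q+1 ≤ n ≤ 2q+1`. -/
def WSubOver {B : Type*} [CommRing B] (R : Set B) (b : B) : Prop :=
  ∃ q : ℕ, ∃ a : ℕ → B, (∀ i, a i ∈ R) ∧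
    ∀ n, q + 1 ≤ n → n ≤ 2 * q + 1 →
      b ^ n + ∑ i ∈ Finset.Icc 1 n, (n.choose i : B) * a i * b ^ (n - i) = 0

/-- An element `b` is weakly subintegral over an ideal `I`:
there are `q ≥ 0` and `a_i ∈ I^i` with
`b^n + ∑_{i=1}^n (n choose i) a_i b^{n-i} = 0` for `q+1 ≤ n ≤ 2q+1`.
The set of such elements is the weak subintegral closure `*I`. -/
def WSubIdeal {A : Type*} [CommRing A] (I : Ideal A) (b : A) : Prop :=
  ∃ q : ℕ, ∃ a : ℕ → A, (∀ i, a i ∈ I ^ i) ∧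
    ∀ n, q + 1 ≤ n → n ≤ 2 * q + 1 →
      b ^ n + ∑ i ∈ Finset.Icc 1 n, (n.choose i : A) * a i * b ^ (n - i) = 0

/-- `a` is integral over the ideal `I`: `a^n + c_1 a^{n-1} + ⋯ + c_n = 0` with `c_i ∈ I^i`.
The set of such elements is the integral closure `Ī` of `I`. -/
def IntegralOverIdeal {A : Type*} [CommRing A] (I : Ideal A) (a : A) : Prop :=
  ∃ n : ℕ, 0 < n ∧ ∃ c : ℕ → A, (∀ i, c i ∈ I ^ i) ∧
    a ^ n + ∑ i ∈ Finset.Icc 1 n, c i * a ^ (n - i) = 0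

/-- `J` is a reduction of `I`: `J ⊆ I` and `J̄ = Ī`. -/
def IsReduction {A : Type*} [CommRing A] (J I : Ideal A) : Prop :=
  J ≤ I ∧ ∀ x, IntegralOverIdeal J x ↔ IntegralOverIdeal I x

/-- `J` is a minimal reduction of `I`. -/
def IsMinimalReduction {A : Type*} [CommRing A] (J I : Ideal A) : Prop :=
  IsReduction J I ∧ ∀ J' : Ideal A, IsReduction J' I → J' ≤ J → J' = J

/-- `ord_I(a) = max {n | a ∈ I^n}` (with value `∞` if `a ∈ ⋂ I^n`). -/
noncomputable def ordI {A : Type*} [CommRing A] (I : Ideal A) (a : A) : ℕ∞ :=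
  ⨆ (n : ℕ) (_ : a ∈ I ^ n), (n : ℕ∞)

/-- The sequence `ord_I(a^n)/n`, whose limit is the asymptotic Samuel function `v̄_I(a)`. -/
noncomputable def samuelSeq {A : Type*} [CommRing A] (I : Ideal A) (a : A) (n : ℕ) : ENNReal :=
  (ordI I (a ^ n) : ENNReal) / (n : ENNReal)

/-- `a ∈ I_>`, i.e. `v̄_I(a) > 1`, where `v̄_I(a)` is the limit of `ord_I(a^n)/n`
(this limit always exists in `[0,∞]`). -/
def MemIgt {A : Type*} [CommRing A] (I : Ideal A) (a : A) : Prop :=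
  ∃ L : ENNReal, 1 < L ∧ Filter.Tendsto (samuelSeq I a) Filter.atTop (nhds L)

attribute [local instance] Ideal.Quotient.field


/-- Coefficients `d_k` with `d_0 = 1`, `d_k = 0` for `1 ≤ k ≤ q` and
`∑_{k ≤ n} (n choose k) d_k = 0` for `n > q`. -/
theorem exists_umbral_coeff (A : Type*) [CommRing A] (q : ℕ) :
    ∃ d : ℕ → A, d 0 = 1 ∧ (∀ k, 1 ≤ k → k ≤ q → d k = 0) ∧
      ∀ n, q + 1 ≤ n → ∑ k ∈ Finset.range (n + 1), (n.choose k : A) * d k = 0 := by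
  let d : ℕ → A := fun n => Nat.strongRec (motive := fun _ => A)
    (fun n ih => if n = 0 then 1 else if n ≤ q then 0 else
      -∑ k : Fin n, (n.choose k : A) * ih k k.2) n
  have hd : ∀ n, d n = if n = 0 then 1 else if n ≤ q then 0 else
      -∑ k : Fin n, (n.choose k : A) * d k := by
    intro n
    simp only [d]
    rw [Nat.strongRec]
  refine ⟨d, by rw [hd]; simp, fun k h1 h2 => ?_, fun n hn => ?_⟩
  · rw [hd, if_neg (by omega), if_pos h2]
  · rw [Finset.sum_range_succ, hd n, if_neg (by omega), if_neg (by omega)]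
    rw [Finset.sum_range]
    simp

/-- If all large powers `c ^ n` lie in `J ^ n` and `j ∈ J`, then `j + c` is weakly subintegral
over `J`. -/
theorem wSubIdeal_add_of_pow_mem {A : Type*} [CommRing A] {J : Ideal A} {j c : A} (hj : j ∈ J)
    {q : ℕ} (hc : ∀ n, q + 1 ≤ n → c ^ n ∈ J ^ n) : WSubIdeal J (j + c) := by
  obtain ⟨d, hd0, hd1, hd2⟩ := exists_umbral_coeff A q
  let L : A[X] →ₗ[A] A := Polynomial.lsum fun k => (d k * c ^ k) • LinearMap.id
  have hL : ∀ k a, L (Polynomial.C a * X ^ k) = a * (d k * c ^ k) := by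
    intro k a
    rw [Polynomial.C_mul_X_pow_eq_monomial, Polynomial.lsum_apply,
      Polynomial.sum_monomial_index _ _ (by simp)]
    simp [mul_comm]
  have hLmul : ∀ a p, L (Polynomial.C a * p) = a * L p := by
    intro a p
    rw [← Polynomial.smul_eq_C_mul, map_smul, smul_eq_mul]
  refine ⟨q, fun n => L ((X - Polynomial.C j) ^ n), fun n => ?_, fun n h1 h2 => ?_⟩
  · simp only [sub_eq_add_neg, add_pow, map_sum]
    refine Ideal.sum_mem _ fun k hk => ?_
    have hkn : k ≤ n := by simpa [Nat.lt_succ_iff] using hk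
    have : (X : A[X]) ^ k * (-Polynomial.C j) ^ (n - k) * (n.choose k : A[X])
        = Polynomial.C ((-j) ^ (n - k) * (n.choose k : A)) * X ^ k := by
      simp; ring
    rw [this, hL]
    have hdk : d k * c ^ k ∈ J ^ k := by
      rcases Nat.lt_or_ge q k with h | h
      · exact Ideal.mul_mem_left _ _ (hc k h)
      · rcases Nat.eq_zero_or_pos k with rfl | h'
        · simp
        · rw [hd1 k h' h, zero_mul]; exact zero_mem _
    have hjk : (-j) ^ (n - k) * (n.choose k : A) ∈ J ^ (n - k) :=
      Ideal.mul_mem_right _ _ (Ideal.pow_mem_pow (neg_mem hj) _)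
    have := Ideal.mul_mem_mul hjk hdk
    rwa [← pow_add, Nat.sub_add_cancel hkn] at this
  · have key : L ((X - Polynomial.C j + Polynomial.C (j + c)) ^ n) = 0 := by
      have : (X - Polynomial.C j + Polynomial.C (j + c) : A[X]) = X + Polynomial.C c := by
        rw [map_add]; ring
      rw [this, add_pow, map_sum]
      have : ∀ k ∈ Finset.range (n + 1),
          L (X ^ k * Polynomial.C c ^ (n - k) * (n.choose k : A[X]))
            = c ^ n * ((n.choose k : A) * d k) := by
        intro k hk
        have hkn : k ≤ n := by simpa [Nat.lt_succ_iff] using hk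
        have : (X : A[X]) ^ k * Polynomial.C c ^ (n - k) * (n.choose k : A[X])
            = Polynomial.C (c ^ (n - k) * (n.choose k : A)) * X ^ k := by
          simp; ring
        rw [this, hL]
        nth_rw 3 [← Nat.sub_add_cancel hkn]
        rw [pow_add]
        ring
      rw [Finset.sum_congr rfl this, ← Finset.mul_sum, hd2 n h1, mul_zero]
    rw [add_pow, map_sum, Finset.range_eq_Ico, Finset.sum_eq_sum_Ico_succ_bot (by omega)] at key
    have h0 : L ((X - Polynomial.C j) ^ 0 * Polynomial.C (j + c) ^ (n - 0) *
        (n.choose 0 : A[X])) = (j + c) ^ n := by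
      have := hL 0 ((j + c) ^ n)
      simpa [hd0] using this
    rw [h0] at key
    rw [← key]
    congr 1
    refine Finset.sum_congr (by ext; simp) fun i hi => ?_
    have : (X - Polynomial.C j) ^ i * Polynomial.C (j + c) ^ (n - i) * (n.choose i : A[X])
        = Polynomial.C ((j + c) ^ (n - i) * (n.choose i : A)) * (X - Polynomial.C j) ^ i := by
      simp; ring
    rw [this, hLmul]
    ring

theorem mem_pow_of_le_ordI {A : Type*} [CommRing A] {I : Ideal A} {a : A} {n : ℕ}
    (h : (n : ℕ∞) ≤ ordI I a) : a ∈ I ^ n := by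
  rcases Nat.eq_zero_or_pos n with rfl | hn
  · simp
  have h' : ((n - 1 : ℕ) : ℕ∞) < ordI I a :=
    lt_of_lt_of_le (by exact_mod_cast Nat.sub_lt hn one_pos) h
  obtain ⟨k, hk⟩ := lt_iSup_iff.1 h'
  obtain ⟨hak, hk⟩ := lt_iSup_iff.1 hk
  have : n - 1 < k := by exact_mod_cast hk
  exact Ideal.pow_le_pow_right (by omega) hak

theorem le_ordI_of_mem_pow {A : Type*} [CommRing A] {I : Ideal A} {a : A} {n : ℕ}
    (h : a ∈ I ^ n) : (n : ℕ∞) ≤ ordI I a :=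
  le_iSup₂_of_le n h le_rfl

theorem le_ordI_iff {A : Type*} [CommRing A] {I : Ideal A} {a : A} {n : ℕ} :
    (n : ℕ∞) ≤ ordI I a ↔ a ∈ I ^ n :=
  ⟨mem_pow_of_le_ordI, le_ordI_of_mem_pow⟩

/-- An element of `I_>` has powers `c ^ n ∈ I ^ (n + r)` for all large `n`. -/
theorem MemIgt.exists_pow_mem {A : Type*} [CommRing A] {I : Ideal A} {c : A} (h : MemIgt I c)
    (r : ℕ) : ∃ q, ∀ n, q + 1 ≤ n → c ^ n ∈ I ^ (n + r) := by
  obtain ⟨L, hL, hlim⟩ := h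
  obtain ⟨t, ht1, htL⟩ := ENNReal.lt_iff_exists_nnreal_btwn.1 hL
  have ht1' : (1 : NNReal) < t := by exact_mod_cast ht1
  obtain ⟨N, hN⟩ := eventually_atTop.1 (hlim.eventually_const_lt htL)
  obtain ⟨M, hM⟩ := exists_nat_ge ((r : ℝ) / ((t : ℝ) - 1))
  have hpos : (0 : ℝ) < t - 1 := sub_pos.2 (by exact_mod_cast ht1')
  refine ⟨max N M, fun n hn => le_ordI_iff.1 ?_⟩
  have hnN := hN n (by omega)
  have hn0 : (n : ENNReal) ≠ 0 := by
    have : n ≠ 0 := by omega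
    exact_mod_cast this
  rw [samuelSeq, ENNReal.lt_div_iff_mul_lt (Or.inl hn0) (Or.inl (ENNReal.natCast_ne_top n))] at hnN
  have hle : ((n + r : ℕ) : ENNReal) ≤ (t : ENNReal) * n := by
    have hr : (n + r : ℝ) ≤ t * n := by
      have h1 : (r : ℝ) ≤ M * (t - 1) := (div_le_iff₀ hpos).1 hM
      have h2 : (M : ℝ) ≤ n := by exact_mod_cast (by omega : M ≤ n)
      nlinarith
    have : ((n + r : ℕ) : NNReal) ≤ t * n := by
      rw [← NNReal.coe_le_coe]; push_cast; exact hr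
    exact_mod_cast this
  have hlt := (hle.trans_lt hnN).le
  have : (((n + r : ℕ) : ℕ∞) : ENNReal) ≤ (ordI I (c ^ n) : ENNReal) := by simpa using hlt
  exact ENat.toENNReal_le.1 this

theorem lt_samuelSeq_iff {A : Type*} [CommRing A] {I : Ideal A} {b : A} {n : ℕ} (hn : 0 < n)
    {c : ENNReal} (hc : c ≠ ⊤) :
    c < samuelSeq I b n ↔ ∃ k : ℕ, c * n < k ∧ b ^ n ∈ I ^ k := by
  have hn0 : (n : ENNReal) ≠ 0 := by exact_mod_cast hn.ne'
  rw [samuelSeq, ENNReal.lt_div_iff_mul_lt (Or.inl hn0) (Or.inl (ENNReal.natCast_ne_top n))]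
  constructor
  · intro h
    by_cases htop : ordI I (b ^ n) = ⊤
    · obtain ⟨k, hk⟩ := ENNReal.exists_nat_gt (ENNReal.mul_ne_top hc (ENNReal.natCast_ne_top n))
      exact ⟨k, hk, le_ordI_iff.1 (htop ▸ le_top)⟩
    · obtain ⟨k, hk⟩ := ENat.ne_top_iff_exists.1 htop
      exact ⟨k, by simpa [← hk] using h, le_ordI_iff.1 hk.le⟩
  · rintro ⟨k, hk, hb⟩
    refine hk.trans_le ?_
    have := ENat.toENNReal_le.2 (le_ordI_iff.2 hb)
    simpa using this

/-- If `b ^ P ∈ I ^ (P + 1)` for some `P > 0`, then `b ∈ I_>`. -/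
theorem memIgt_of_pow_mem {A : Type*} [CommRing A] {I : Ideal A} {b : A} {P : ℕ} (hP : 0 < P)
    (h : b ^ P ∈ I ^ (P + 1)) : MemIgt I b := by
  refine ⟨⨆ n : ℕ, ⨆ _ : 0 < n, samuelSeq I b n, ?_, tendsto_order.2 ⟨fun c hc => ?_, ?_⟩⟩
  · refine lt_of_lt_of_le ?_ (le_iSup₂ P hP)
    refine (lt_samuelSeq_iff hP ENNReal.one_ne_top).2 ⟨P + 1, ?_, h⟩
    rw [one_mul]
    exact_mod_cast Nat.lt_succ_self P
  · obtain ⟨N, hN⟩ := lt_iSup_iff.1 hc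
    obtain ⟨hN0, hN⟩ := lt_iSup_iff.1 hN
    lift c to NNReal using hN.ne_top
    obtain ⟨k, hk, hbk⟩ := (lt_samuelSeq_iff hN0 ENNReal.coe_ne_top).1 hN
    have hk' : (c : ℝ) * N < k := by
      have : c * N < (k : NNReal) := by exact_mod_cast hk
      exact_mod_cast this
    obtain ⟨M, hM⟩ := exists_nat_gt ((c : ℝ) * N / (k - c * N))
    rw [div_lt_iff₀ (sub_pos.2 hk')] at hM
    refine eventually_atTop.2 ⟨(M + 1) * N, fun n hn => ?_⟩
    have hMn : M + 1 ≤ n / N := (Nat.le_div_iff_mul_le hN0).2 hn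
    have hn0 : 0 < n := lt_of_lt_of_le (by positivity) hn
    refine (lt_samuelSeq_iff hn0 ENNReal.coe_ne_top).2 ⟨n / N * k, ?_, ?_⟩
    · have h1 : (n : ℝ) < (n / N : ℕ) * N + N := by
        have := Nat.div_add_mod n N
        have h2 := Nat.mod_lt n hN0
        have : n < n / N * N + N := by rw [mul_comm (n / N) N]; omega
        exact_mod_cast this
      have h2 : (M : ℝ) ≤ (n / N : ℕ) := by exact_mod_cast (by omega : M ≤ n / N)
      have h3 : (c : ℝ) * n < (n / N : ℕ) * k := by
        have hc0 : (0 : ℝ) ≤ c := c.2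
        have h4 : (M : ℝ) * (k - c * N) ≤ (n / N : ℕ) * (k - c * N) :=
          mul_le_mul_of_nonneg_right h2 (sub_pos.2 hk').le
        have h5 := mul_le_mul_of_nonneg_left h1.le hc0
        nlinarith
      have : c * n < ((n / N * k : ℕ) : NNReal) := by
        rw [← NNReal.coe_lt_coe]; push_cast; exact_mod_cast h3
      exact_mod_cast this
    · have : b ^ n = (b ^ N) ^ (n / N) * b ^ (n % N) := by
        rw [← pow_mul, ← pow_add, Nat.div_add_mod]
      rw [this, mul_comm (n / N) k, pow_mul]
      exact Ideal.mul_mem_right _ _ (Ideal.pow_mem_pow hbk _)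
  · intro c hc
    filter_upwards [eventually_gt_atTop 0] with n hn
    exact (le_iSup₂ (f := fun (n : ℕ) (_ : 0 < n) => samuelSeq I b n) n hn).trans_lt hc

theorem IntegralOverIdeal.mono {A : Type*} [CommRing A] {J I : Ideal A} (h : J ≤ I) {x : A}
    (hx : IntegralOverIdeal J x) : IntegralOverIdeal I x := by
  obtain ⟨n, hn, c, hc, h0⟩ := hx
  exact ⟨n, hn, c, fun i => Ideal.pow_right_mono h i (hc i), h0⟩

theorem integralOverIdeal_of_mem {A : Type*} [CommRing A] {I : Ideal A} {x : A}
    (hx : x ∈ I) : IntegralOverIdeal I x := by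
  refine ⟨1, one_pos, fun i => if i = 1 then -x else 0, fun i => ?_, by simp⟩
  dsimp only
  split_ifs with h
  · simpa [h] using hx
  · exact zero_mem _

theorem WSubIdeal.integralOverIdeal {A : Type*} [CommRing A] {J : Ideal A} {x : A}
    (hx : WSubIdeal J x) : IntegralOverIdeal J x := by
  obtain ⟨q, a, ha, h⟩ := hx
  exact ⟨q + 1, q.succ_pos, fun i => ((q + 1).choose i : A) * a i,
    fun i => Ideal.mul_mem_left _ _ (ha i), h (q + 1) le_rfl (by omega)⟩

theorem IntegralOverIdeal.pow_mem_mul {A : Type*} [CommRing A] {J : Ideal A} {x : A}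
    (hx : IntegralOverIdeal J x) :
    ∃ r : ℕ, x ^ (r + 1) ∈ J * (J ⊔ Ideal.span {x}) ^ r := by
  obtain ⟨n, hn, c, hc, h⟩ := hx
  obtain ⟨r, rfl⟩ : ∃ r, n = r + 1 := ⟨n - 1, by omega⟩
  refine ⟨r, ?_⟩
  rw [eq_neg_of_add_eq_zero_left h]
  refine neg_mem (Ideal.sum_mem _ fun i hi => ?_)
  obtain ⟨hi1, hi2⟩ := Finset.mem_Icc.1 hi
  obtain ⟨j, rfl⟩ : ∃ j, i = j + 1 := ⟨i - 1, by omega⟩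
  have h1 : c (j + 1) ∈ J * (J ⊔ Ideal.span {x}) ^ j := by
    have := hc (j + 1)
    rw [pow_succ'] at this
    exact Ideal.mul_mono_right (Ideal.pow_right_mono le_sup_left j) this
  have h2 : x ^ (r + 1 - (j + 1)) ∈ (J ⊔ Ideal.span {x}) ^ (r - j) := by
    rw [Nat.add_sub_add_right]
    exact Ideal.pow_mem_pow (Ideal.mem_sup_right (Ideal.mem_span_singleton_self x)) _
  have := Ideal.mul_mem_mul h1 h2
  rwa [mul_assoc, ← pow_add, Nat.add_sub_cancel' (by omega)] at this

/-- If `y ^ (r + 1) ∈ J' L ^ r` and `L ≤ J' + (y)`, then `L ^ (r + 1) ≤ J' L ^ r`. -/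
theorem pow_succ_le_mul_of_le_sup_span {A : Type*} [CommRing A] {J' L : Ideal A} {y : A}
    (hL : L ≤ J' ⊔ Ideal.span {y}) (hy : y ∈ L) {r : ℕ} (h : y ^ (r + 1) ∈ J' * L ^ r) :
    L ^ (r + 1) ≤ J' * L ^ r := by
  have key : ∀ i ≤ r + 1, L ^ i ≤ Ideal.span {y ^ i} ⊔ J' * L ^ (i - 1) := by
    intro i
    induction i with
    | zero => intro _; simp
    | succ i ih =>
      intro hi
      rw [pow_succ', Nat.add_sub_cancel]
      refine (Ideal.mul_mono_left hL).trans ?_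
      rw [Ideal.sup_mul]
      refine sup_le le_sup_right ((Ideal.mul_mono_right (ih (by omega))).trans ?_)
      rw [Ideal.mul_sup, Ideal.span_singleton_mul_span_singleton, ← pow_succ']
      refine sup_le le_sup_left ?_
      rcases Nat.eq_zero_or_pos i with rfl | hi0
      · refine le_trans ?_ le_sup_right
        simp only [Nat.zero_sub, pow_zero, Ideal.one_eq_top, Ideal.mul_top]
        exact Ideal.mul_le_right
      · refine le_trans ?_ le_sup_right
        rw [mul_left_comm]
        refine Ideal.mul_mono_right ?_
        calc Ideal.span {y} * L ^ (i - 1) ≤ L * L ^ (i - 1) :=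
              Ideal.mul_mono_left ((Ideal.span_singleton_le_iff_mem _).2 hy)
          _ = L ^ i := by rw [← pow_succ', Nat.sub_add_cancel hi0]
  refine (key (r + 1) le_rfl).trans (sup_le ((Ideal.span_singleton_le_iff_mem _).2 h) le_rfl)

theorem IntegralOverIdeal.exists_pow_succ_le {A : Type*} [CommRing A] {J : Ideal A} {x : A}
    (hx : IntegralOverIdeal J x) :
    ∃ r : ℕ, (J ⊔ Ideal.span {x}) ^ (r + 1) ≤ J * (J ⊔ Ideal.span {x}) ^ r := by
  obtain ⟨r, hr⟩ := hx.pow_mem_mul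
  exact ⟨r, pow_succ_le_mul_of_le_sup_span le_rfl
    (Ideal.mem_sup_right (Ideal.mem_span_singleton_self x)) hr⟩

theorem pow_add_le_of_pow_succ_le {A : Type*} [CommRing A] {J L : Ideal A} {r : ℕ}
    (h : L ^ (r + 1) ≤ J * L ^ r) (n : ℕ) : L ^ (n + r) ≤ J ^ n * L ^ r := by
  induction n with
  | zero => simp
  | succ n ih =>
    calc L ^ (n + 1 + r) = L * L ^ (n + r) := by rw [← pow_succ']; congr 1; omega
      _ ≤ L * (J ^ n * L ^ r) := Ideal.mul_mono_right ih
      _ = J ^ n * L ^ (r + 1) := by rw [pow_succ']; ring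
      _ ≤ J ^ n * (J * L ^ r) := Ideal.mul_mono_right h
      _ = J ^ (n + 1) * L ^ r := by ring

/-- If every element of a finitely generated ideal `I` is integral over `J`, then the powers of
`J + I` are eventually contained in those of `J`, up to a bounded shift. -/
theorem exists_sup_pow_add_le {A : Type*} [CommRing A] {J I : Ideal A} (hI : I.FG)
    (h : ∀ x ∈ I, IntegralOverIdeal J x) : ∃ r : ℕ, ∀ n, (J ⊔ I) ^ (n + r) ≤ J ^ n := by
  classical
  obtain ⟨s, rfl⟩ := hI
  induction s using Finset.induction_on with
  | empty => exact ⟨0, fun n => by simp⟩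
  | insert x s hxs ih =>
    obtain ⟨r, hr⟩ := ih fun y hy =>
      h y (Ideal.span_mono (Finset.coe_subset.2 (Finset.subset_insert x s)) hy)
    have hx : IntegralOverIdeal (J ⊔ Ideal.span s) x :=
      (h x (Ideal.subset_span (by simp))).mono le_sup_left
    obtain ⟨r', hr'⟩ := hx.exists_pow_succ_le
    refine ⟨r + r', fun n => ?_⟩
    have heq : J ⊔ Ideal.span ((insert x s : Finset A) : Set A)
        = J ⊔ Ideal.span s ⊔ Ideal.span {x} := by
      rw [Finset.coe_insert, Ideal.span_insert, sup_comm (Ideal.span {x}), sup_assoc]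
    rw [heq, ← add_assoc]
    exact (pow_add_le_of_pow_succ_le hr' (n + r)).trans (Ideal.mul_le_left.trans (hr n))

/-- Determinant trick: if `x M ⊆ J M` for a finitely generated ideal `M` containing a power
of `x`, then `x` is integral over `J`. -/
theorem integralOverIdeal_of_span_mul_le {A : Type*} [CommRing A] {J M : Ideal A} (hM : M.FG)
    {x : A} (h : Ideal.span {x} * M ≤ J * M) {s : ℕ} (hs : x ^ s ∈ M) :
    IntegralOverIdeal J x := by
  have : Module.Finite A M := Module.Finite.iff_fg.2 hM
  obtain ⟨p, hp, -, hcoeff, hzero⟩ :=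
    LinearMap.exists_monic_and_natDegree_eq_and_coeff_mem_pow_and_aeval_eq_zero A
      (algebraMap A (Module.End A M) x) J (by
        rintro _ ⟨v, rfl⟩
        have hv : x * (v : A) ∈ J • M :=
          h (Ideal.mul_mem_mul (Ideal.mem_span_singleton_self x) v.2)
        have hmap : (J • (⊤ : Submodule A M)).map M.subtype = J • M := by
          rw [Submodule.map_smul'', Submodule.map_top, Submodule.range_subtype]
        rw [← hmap] at hv
        obtain ⟨w, hw, hwv⟩ := hv
        have : (algebraMap A (Module.End A M) x) v = w := Subtype.ext hwv.symm
        rwa [this])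
  have heval : p.eval x * x ^ s = 0 := by
    rw [Polynomial.aeval_algebraMap_apply] at hzero
    simpa using congrArg Subtype.val (LinearMap.congr_fun hzero ⟨x ^ s, hs⟩)
  set d := p.natDegree with hd
  refine ⟨d + (s + 1), by omega, fun i => if i ≤ d then p.coeff (d - i) else 0, fun i => ?_, ?_⟩
  · dsimp only
    split_ifs with hi
    · simpa [Nat.sub_sub_self hi] using hcoeff (d - i)
    · exact zero_mem _
  · have hsum : ∑ i ∈ Finset.Icc 1 (d + (s + 1)),
        (if i ≤ d then p.coeff (d - i) else 0) * x ^ (d + (s + 1) - i)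
        = ∑ i ∈ Finset.Icc 1 d, p.coeff (d - i) * x ^ (d - i) * x ^ (s + 1) := by
      symm
      refine Finset.sum_subset_zero_on_sdiff (Finset.Icc_subset_Icc_right (by omega))
        (fun i hi => ?_) fun i hi => ?_
      · rw [if_neg, zero_mul]
        intro h
        simp only [Finset.mem_sdiff, Finset.mem_Icc] at hi
        omega
      · have hid := (Finset.mem_Icc.1 hi).2
        rw [if_pos hid, mul_assoc, ← pow_add]
        congr 2
        omega
    have hexp : p.eval x = x ^ d + ∑ i ∈ Finset.Icc 1 d, p.coeff (d - i) * x ^ (d - i) := by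
      rw [Polynomial.eval_eq_sum_range, ← Finset.sum_range_reflect, Finset.range_eq_Ico,
        Finset.sum_eq_sum_Ico_succ_bot (by omega)]
      congr 1
      simp [← hd, show p.coeff d = 1 from hp]
    rw [hsum, ← Finset.sum_mul, pow_add, ← add_mul, ← hexp, pow_succ, ← mul_assoc, heval, zero_mul]

/-- A reduction of a reduction is a reduction. -/
theorem IsReduction.of_pow_succ_le {A : Type*} [CommRing A] [IsNoetherianRing A]
    {J' J I : Ideal A} (hJ : IsReduction J I) (hJ' : J' ≤ J) {n : ℕ}
    (h : J ^ (n + 1) ≤ J' * J ^ n) : IsReduction J' I := by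
  refine ⟨hJ'.trans hJ.1, fun x => ⟨fun hx => hx.mono (hJ'.trans hJ.1), fun hx => ?_⟩⟩
  have hxJ := (hJ.2 x).2 hx
  obtain ⟨r, hr⟩ := hxJ.exists_pow_succ_le
  obtain ⟨e, he⟩ := hxJ.pow_mem_mul
  set L := J ⊔ Ideal.span {x}
  have hxL : x ∈ L := Ideal.mem_sup_right (Ideal.mem_span_singleton_self x)
  refine integralOverIdeal_of_span_mul_le (M := L ^ r * J ^ n) (s := r + (e + 1) * n)
    (IsNoetherian.noetherian _) ?_ ?_
  · calc Ideal.span {x} * (L ^ r * J ^ n) ≤ L * (L ^ r * J ^ n) :=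
          Ideal.mul_mono_left ((Ideal.span_singleton_le_iff_mem _).2 hxL)
      _ = L ^ (r + 1) * J ^ n := by ring
      _ ≤ J * L ^ r * J ^ n := Ideal.mul_mono_left hr
      _ = L ^ r * J ^ (n + 1) := by ring
      _ ≤ L ^ r * (J' * J ^ n) := Ideal.mul_mono_right h
      _ = J' * (L ^ r * J ^ n) := by ring
  · rw [pow_add, pow_mul]
    exact Ideal.mul_mem_mul (Ideal.pow_mem_pow hxL r)
      (Ideal.pow_mem_pow (Ideal.mul_le_left he) n)

/-- The Appell-type polynomial `∑ i ≤ N, (N choose i) a_i T ^ (N - i)` attached to a system of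
weak subintegrality; one takes `a 0 = 1`. -/
noncomputable def appell {S : Type*} [CommRing S] (a : ℕ → S) (N : ℕ) : S[X] :=
  ∑ i ∈ Finset.range (N + 1), Polynomial.C ((N.choose i : S) * a i) * X ^ (N - i)

theorem appell_map {S R : Type*} [CommRing S] [CommRing R] (f : S →+* R) (a : ℕ → S) (N : ℕ) :
    (appell a N).map f = appell (fun i => f (a i)) N := by
  simp [appell, Polynomial.map_sum]

theorem appell_monic_natDegree {S : Type*} [CommRing S] [Nontrivial S] {a : ℕ → S} (h0 : a 0 = 1)
    (N : ℕ) : (appell a N).Monic ∧ (appell a N).natDegree = N := by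
  have hlt : (∑ i ∈ Finset.Ico 1 (N + 1),
      Polynomial.C ((N.choose i : S) * a i) * X ^ (N - i)).degree < (N : WithBot ℕ) := by
    rw [← Polynomial.mem_degreeLT]
    refine Submodule.sum_mem _ fun i hi => Polynomial.mem_degreeLT.2 ?_
    refine (Polynomial.degree_C_mul_X_pow_le _ _).trans_lt ?_
    have := Finset.mem_Ico.1 hi
    exact_mod_cast (by omega : N - i < N)
  have heq : appell a N = X ^ N + ∑ i ∈ Finset.Ico 1 (N + 1),
      Polynomial.C ((N.choose i : S) * a i) * X ^ (N - i) := by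
    rw [appell, Finset.range_eq_Ico, Finset.sum_eq_sum_Ico_succ_bot (by omega)]
    simp [h0]
  have hm : (appell a N).Monic := heq ▸ Polynomial.monic_X_pow_add hlt
  refine ⟨hm, ?_⟩
  rw [heq]
  refine Polynomial.natDegree_eq_of_degree_eq_some ?_
  rw [Polynomial.degree_add_eq_left_of_degree_lt (by simpa using hlt), Polynomial.degree_X_pow]

/-- Taylor expansion of the Appell polynomials. -/
theorem appell_comp_X_add_C {S : Type*} [CommRing S] (a : ℕ → S) (N : ℕ) (b : S) :
    (appell a N).comp (X + Polynomial.C b) = ∑ j ∈ Finset.range (N + 1),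
      Polynomial.C ((N.choose j : S) * (appell a (N - j)).eval b) * X ^ j := by
  let L : S[X][X] →ₗ[S[X]] S[X] := Polynomial.lsum fun k => Polynomial.C (a k) • LinearMap.id
  have hL : ∀ k (p : S[X]), L (Polynomial.C p * X ^ k) = p * Polynomial.C (a k) := by
    intro k p
    rw [Polynomial.C_mul_X_pow_eq_monomial, Polynomial.lsum_apply,
      Polynomial.sum_monomial_index _ _ (by simp)]
    simp [mul_comm]
  have hLmul : ∀ (p : S[X]) (P : S[X][X]), L (Polynomial.C p * P) = p * L P := by
    intro p P
    rw [← Polynomial.smul_eq_C_mul, map_smul, smul_eq_mul]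
  have hpow : ∀ (p : S[X]) n, L ((X + Polynomial.C p) ^ n) = (appell a n).comp p := by
    intro p n
    rw [add_pow, map_sum, appell, Polynomial.sum_comp]
    refine Finset.sum_congr rfl fun i _ => ?_
    have : (X : S[X][X]) ^ i * Polynomial.C p ^ (n - i) * (n.choose i : S[X][X])
        = Polynomial.C (p ^ (n - i) * (n.choose i : S[X])) * X ^ i := by
      simp only [map_mul, map_pow, map_natCast]; ring
    rw [this, hL]
    simp only [map_mul, map_natCast, Polynomial.mul_comp, Polynomial.C_comp,
      Polynomial.natCast_comp, Polynomial.X_pow_comp]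
    ring
  rw [← hpow]
  have : (X + Polynomial.C (X + Polynomial.C b) : S[X][X])
      = Polynomial.C X + (X + Polynomial.C (Polynomial.C b)) := by
    rw [map_add]; ring
  rw [this, add_pow, map_sum]
  refine Finset.sum_congr rfl fun j _ => ?_
  have : (Polynomial.C X : S[X][X]) ^ j * (X + Polynomial.C (Polynomial.C b)) ^ (N - j) *
      (N.choose j : S[X][X]) = Polynomial.C (X ^ j * (N.choose j : S[X])) *
      (X + Polynomial.C (Polynomial.C b)) ^ (N - j) := by
    simp only [map_mul, map_pow, map_natCast]; ring
  rw [this, hLmul, hpow, Polynomial.comp_C]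
  simp only [map_mul, map_natCast]
  ring

/-- A solution of a system of weak subintegrality is a root of high multiplicity. -/
theorem X_sub_C_pow_dvd_appell {S : Type*} [CommRing S] {a : ℕ → S} {b : S} {q : ℕ}
    (h : ∀ n, q + 1 ≤ n → n ≤ 2 * q + 1 → (appell a n).eval b = 0) :
    (X - Polynomial.C b) ^ (q + 1) ∣ appell a (2 * q + 1) := by
  have h1 : (X : S[X]) ^ (q + 1) ∣ (appell a (2 * q + 1)).comp (X + Polynomial.C b) := by
    rw [appell_comp_X_add_C]
    refine Finset.dvd_sum fun j hj => ?_
    have hj' := Finset.mem_range.1 hj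
    rcases Nat.lt_or_ge q j with hqj | hqj
    · exact Dvd.dvd.mul_left (pow_dvd_pow _ hqj) _
    · rw [h _ (by omega) (by omega)]
      simp
  obtain ⟨g, hg⟩ := h1
  refine ⟨g.comp (X - Polynomial.C b), ?_⟩
  have := congrArg (fun p : S[X] => p.comp (X - Polynomial.C b)) hg
  simpa [Polynomial.comp_assoc] using this

/-- Over an integrally closed domain of characteristic zero, a root `b` (in an extension domain)
of multiplicity greater than half the degree of a monic polynomial is rational. -/
theorem exists_eq_algebraMap_of_pow_dvd {S L : Type*} [CommRing S] [IsDomain S]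
    [IsIntegrallyClosed S] [CharZero S] [Field L] [Algebra S L] [Module.IsTorsionFree S L]
    {F : S[X]} (hF : F.Monic) {q : ℕ} (hdeg : F.natDegree = 2 * q + 1) {b : L}
    (h : (X - Polynomial.C b) ^ (q + 1) ∣ F.map (algebraMap S L)) :
    ∃ s : S, algebraMap S L s = b ∧ (X - Polynomial.C s) ^ (q + 1) ∣ F := by
  have hroot : Polynomial.aeval b F = 0 := by
    rw [← Polynomial.eval_map_algebraMap]
    exact Polynomial.dvd_iff_isRoot.1 ((dvd_pow_self _ q.succ_ne_zero).trans h)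
  have hbint : IsIntegral S b := ⟨F, hF, hroot⟩
  set M := minpoly S b with hM
  have hMmon : M.Monic := minpoly.monic hbint
  have hMpos : 0 < M.natDegree := minpoly.natDegree_pos hbint
  have hMdeg : 0 < M.degree := Polynomial.natDegree_pos_iff_degree_pos.1 hMpos
  have hMmap0 : M.map (algebraMap S L) ≠ 0 := (hMmon.map _).ne_zero
  obtain ⟨G, hG, hMG⟩ := (Polynomial.finiteMultiplicity_of_degree_pos_of_monic hMdeg hMmon
    hF.ne_zero).exists_eq_pow_mul_and_not_dvd
  set e := multiplicity M F
  have hGroot : ¬ (G.map (algebraMap S L)).IsRoot b := by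
    intro hr
    refine hMG (minpoly.isIntegrallyClosed_dvd hbint ?_)
    rwa [← Polynomial.eval_map_algebraMap]
  have hMroot : (M.map (algebraMap S L)).rootMultiplicity b ≤ 1 := by
    by_contra! hlt
    have hder := (Polynomial.one_lt_rootMultiplicity_iff_isRoot hMmap0).1 hlt
    have hder' : Polynomial.aeval b (Polynomial.derivative M) = 0 := by
      rw [← Polynomial.eval_map_algebraMap, ← Polynomial.derivative_map]
      exact hder.2
    have hdvd := minpoly.isIntegrallyClosed_dvd hbint hder'
    have hne : Polynomial.derivative M ≠ 0 := by
      intro h0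
      exact hMpos.ne' (Polynomial.derivative_eq_zero.1 h0)
    have : M.natDegree ≤ _ := Polynomial.natDegree_le_of_dvd hdvd hne
    exact absurd (Polynomial.natDegree_derivative_lt hMpos.ne') (by omega)
  have hFmap : F.map (algebraMap S L)
      = (M.map (algebraMap S L)) ^ e * G.map (algebraMap S L) := by
    conv_lhs => rw [hG]
    simp
  have hF0 : F.map (algebraMap S L) ≠ 0 := (hF.map _).ne_zero
  have hqe : q + 1 ≤ e := by
    have h1 := (Polynomial.le_rootMultiplicity_iff hF0).2 h
    rw [hFmap, Polynomial.rootMultiplicity_mul (hFmap ▸ hF0),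
      Polynomial.rootMultiplicity_eq_zero hGroot, add_zero] at h1
    have h2 : ((M.map (algebraMap S L)) ^ e).rootMultiplicity b
        = e * (M.map (algebraMap S L)).rootMultiplicity b := by
      classical
      rw [← Polynomial.count_roots, Polynomial.roots_pow, Multiset.count_nsmul,
        Polynomial.count_roots]
    rw [h2] at h1
    nlinarith
  have hdvd : M ^ (q + 1) ∣ F := (pow_dvd_pow M hqe).trans ⟨G, hG⟩
  have hle : (q + 1) * M.natDegree ≤ 2 * q + 1 := by
    rw [← hMmon.natDegree_pow, ← hdeg]
    exact Polynomial.natDegree_le_of_dvd hdvd hF.ne_zero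
  have hM1 : M.natDegree = 1 := by
    by_contra hne
    have : 2 ≤ M.natDegree := by omega
    nlinarith
  have hMX : M = X - Polynomial.C (-M.coeff 0) := by
    rw [hMmon.eq_X_add_C hM1]
    simp
  refine ⟨-M.coeff 0, ?_, hMX ▸ hdvd⟩
  have := minpoly.aeval S b
  rw [← hM, hMX] at this
  simp only [map_sub, Polynomial.aeval_X, Polynomial.aeval_C] at this
  exact (sub_eq_zero.1 this).symm

/-- An element of a ring `B` that is weakly subintegral over an integrally closed subdomain `S`
of characteristic zero differs from an element of `S` by a nilpotent. -/
theorem exists_isNilpotent_sub {S B : Type*} [CommRing S] [IsDomain S] [IsIntegrallyClosed S]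
    [CharZero S] [CommRing B] (f : S →+* B) (hf : Function.Injective f) {a : ℕ → S}
    (h0 : a 0 = 1) {b : B} {q : ℕ}
    (h : ∀ n, q + 1 ≤ n → n ≤ 2 * q + 1 → (appell (fun i => f (a i)) n).eval b = 0) :
    ∃ s : S, IsNilpotent (b - f s) := by
  obtain ⟨hmon, hdeg⟩ := appell_monic_natDegree h0 (2 * q + 1)
  have hdvd : (X - Polynomial.C b) ^ (q + 1) ∣ (appell a (2 * q + 1)).map f := by
    rw [appell_map]
    exact X_sub_C_pow_dvd_appell h
  obtain ⟨P, hP, hPf⟩ := Ideal.exists_comap_eq_of_mem_minimalPrimes_of_injective hf ⊥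
    (by rw [IsDomain.minimalPrimes_eq_singleton_bot]; rfl)
  have hmapdvd : ∀ {L : Type _} [CommRing L] (g : B →+* L),
      (X - Polynomial.C (g b)) ^ (q + 1) ∣ (appell a (2 * q + 1)).map (g.comp f) := by
    intro L _ g
    have := Polynomial.map_dvd g hdvd
    simpa [Polynomial.map_map] using this
  obtain ⟨s, -, hs⟩ : ∃ s : S, (algebraMap (B ⧸ P) (FractionRing (B ⧸ P)))
      (Ideal.Quotient.mk P (f s)) = algebraMap (B ⧸ P) (FractionRing (B ⧸ P))
      (Ideal.Quotient.mk P b) ∧ (X - Polynomial.C s) ^ (q + 1) ∣ appell a (2 * q + 1) := by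
    let g : B →+* FractionRing (B ⧸ P) :=
      (algebraMap (B ⧸ P) (FractionRing (B ⧸ P))).comp (Ideal.Quotient.mk P)
    let _ : Algebra S (FractionRing (B ⧸ P)) := (g.comp f).toAlgebra
    have hinj : Function.Injective (algebraMap S (FractionRing (B ⧸ P))) := by
      refine (injective_iff_map_eq_zero _).2 fun s hs => ?_
      have h1 : Ideal.Quotient.mk P (f s) = 0 :=
        (IsFractionRing.injective (B ⧸ P) (FractionRing (B ⧸ P)))
          (by rw [map_zero]; exact hs)
      have h2 : s ∈ P.comap f := Ideal.mem_comap.2 <| Ideal.Quotient.eq_zero_iff_mem.1 h1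
      rwa [hPf] at h2
    have : FaithfulSMul S (FractionRing (B ⧸ P)) :=
      (faithfulSMul_iff_algebraMap_injective _ _).2 hinj
    exact exists_eq_algebraMap_of_pow_dvd hmon hdeg (hmapdvd g)
  refine ⟨s, ?_⟩
  rw [← mem_nilradical, nilradical_eq_sInf, Submodule.mem_sInf]
  intro (Q : Ideal B) hQ
  have hQ' : Q.IsPrime := hQ
  let g : B →+* FractionRing (B ⧸ Q) :=
    (algebraMap (B ⧸ Q) (FractionRing (B ⧸ Q))).comp (Ideal.Quotient.mk Q)
  suffices hg : g b = g (f s) by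
    rw [← Ideal.Quotient.eq_zero_iff_mem]
    refine (IsFractionRing.injective (B ⧸ Q) (FractionRing (B ⧸ Q))) ?_
    rw [map_zero]
    exact (map_sub g _ _).trans (sub_eq_zero.2 hg)
  by_contra hne
  have h1 := hmapdvd g
  have h2 : (X - Polynomial.C (g (f s))) ^ (q + 1) ∣ (appell a (2 * q + 1)).map (g.comp f) := by
    have := Polynomial.map_dvd (g.comp f) hs
    simpa using this
  have hcop : IsCoprime ((X - Polynomial.C (g b)) ^ (q + 1))
      ((X - Polynomial.C (g (f s))) ^ (q + 1)) :=
    (Polynomial.isCoprime_X_sub_C_of_isUnit_sub (isUnit_iff_ne_zero.2 (sub_ne_zero.2 hne))).pow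
  have h3 := Polynomial.natDegree_le_of_dvd (hcop.mul_dvd h1 h2) (hmon.map _).ne_zero
  rw [((Polynomial.monic_X_sub_C _).pow _).natDegree_mul ((Polynomial.monic_X_sub_C _).pow _),
    (Polynomial.monic_X_sub_C _).natDegree_pow, (Polynomial.monic_X_sub_C _).natDegree_pow,
    hmon.natDegree_map, hdeg] at h3
  simp only [Polynomial.natDegree_X_sub_C] at h3
  omega

/-- The coefficients of the evaluation of a homogeneous polynomial at `x_i t`. -/
theorem aeval_monomial_one_of_isHomogeneous {A σ : Type*} [CommRing A] {g : MvPolynomial σ A}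
    {n : ℕ} (hg : g.IsHomogeneous n) (x : σ → A) :
    MvPolynomial.aeval (fun i => Polynomial.monomial 1 (x i)) g
      = Polynomial.monomial n (MvPolynomial.aeval x g) := by
  rw [MvPolynomial.aeval_def, MvPolynomial.aeval_def, MvPolynomial.eval₂_eq,
    MvPolynomial.eval₂_eq, map_sum]
  refine Finset.sum_congr rfl fun d hd => ?_
  have hdeg : ∑ i ∈ d.support, d i = n := (hg.degree_eq_sum_deg_support hd).symm
  have : ∀ i ∈ d.support, (Polynomial.monomial 1 (x i)) ^ d i
      = Polynomial.C (x i ^ d i) * X ^ d i := by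
    intro i _
    rw [← Polynomial.C_mul_X_eq_monomial, mul_pow, map_pow]
  rw [Finset.prod_congr rfl this, Finset.prod_mul_distrib, Finset.prod_pow_eq_pow_sum, hdeg,
    ← map_prod, ← Polynomial.C_mul_X_pow_eq_monomial, map_mul, mul_assoc]
  rfl

theorem coeff_aeval_monomial_one {A σ : Type*} [CommRing A] (g : MvPolynomial σ A)
    (x : σ → A) (n : ℕ) :
    (MvPolynomial.aeval (fun i => Polynomial.monomial 1 (x i)) g).coeff n
      = MvPolynomial.aeval x (MvPolynomial.homogeneousComponent n g) := by
  conv_lhs => rw [← MvPolynomial.sum_homogeneousComponent g]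
  rw [map_sum, Polynomial.finsetSum_coeff]
  have : ∀ i ∈ Finset.range (g.totalDegree + 1),
      (MvPolynomial.aeval (fun i => Polynomial.monomial 1 (x i))
        (MvPolynomial.homogeneousComponent i g)).coeff n
      = if i = n then MvPolynomial.aeval x (MvPolynomial.homogeneousComponent i g) else 0 := by
    intro i _
    rw [aeval_monomial_one_of_isHomogeneous (MvPolynomial.homogeneousComponent_isHomogeneous i g),
      Polynomial.coeff_monomial]
  rw [Finset.sum_congr rfl this, Finset.sum_ite_eq']
  split_ifs with h
  · rfl
  · rw [MvPolynomial.homogeneousComponent_eq_zero _ _ (by simpa using h), map_zero]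

/-- Evaluating a form of degree `n + 1` at points of `J` congruent modulo `J'` gives values
congruent modulo `J' J ^ n`. -/
theorem aeval_sub_aeval_mem {A σ : Type*} [CommRing A] {J' J : Ideal A}
    {x z : σ → A} (hx : ∀ i, x i ∈ J) (hz : ∀ i, z i ∈ J) (hxz : ∀ i, x i - z i ∈ J')
    {g : MvPolynomial σ A} {n : ℕ} (hg : g.IsHomogeneous (n + 1)) :
    MvPolynomial.aeval x g - MvPolynomial.aeval z g ∈ J' * J ^ n := by
  have key : ∀ s : Multiset σ, (s.map x).prod ∈ J ^ s.card ∧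
      ∀ k, s.card = k + 1 → (s.map x).prod - (s.map z).prod ∈ J' * J ^ k := by
    intro s
    induction s using Multiset.induction_on with
    | empty => simp
    | cons i s ih =>
      rw [Multiset.map_cons, Multiset.map_cons, Multiset.prod_cons, Multiset.prod_cons,
        Multiset.card_cons]
      refine ⟨by rw [pow_succ']; exact Ideal.mul_mem_mul (hx i) ih.1, fun k hk => ?_⟩
      have hk' : s.card = k := by omega
      have heq : x i * (s.map x).prod - z i * (s.map z).prod
          = (x i - z i) * (s.map x).prod + z i * ((s.map x).prod - (s.map z).prod) := by ring
      rw [heq]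
      refine add_mem (Ideal.mul_mem_mul (hxz i) (hk' ▸ ih.1)) ?_
      rcases k with _ | k
      · rw [Multiset.card_eq_zero.1 hk']
        simp
      · have := Ideal.mul_mem_mul (hz i) (ih.2 k hk')
        rwa [mul_left_comm, ← pow_succ'] at this
  rw [MvPolynomial.aeval_def, MvPolynomial.aeval_def, MvPolynomial.eval₂_eq,
    MvPolynomial.eval₂_eq, ← Finset.sum_sub_distrib]
  refine Ideal.sum_mem _ fun d hd => ?_
  rw [← mul_sub]
  refine Ideal.mul_mem_left _ _ ?_
  have hdeg : ∑ i ∈ d.support, d i = n + 1 := (hg.degree_eq_sum_deg_support hd).symm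
  have h1 := (key d.toMultiset).2 n (by rw [Finsupp.card_toMultiset]; exact hdeg)
  have hprod : ∀ w : σ → A, (d.toMultiset.map w).prod = ∏ i ∈ d.support, w i ^ d i := by
    intro w
    rw [Finsupp.toMultiset_map, Finsupp.prod_toMultiset,
      Finsupp.prod_mapDomain_index (fun _ => pow_zero _) (fun _ _ _ => pow_add _ _ _)]
    rfl
  rwa [hprod, hprod] at h1

/-- Minimality of `J`: for a hyperplane `ker φ` of `J / m J` and `y ∈ J` off the hyperplane, no
power `y ^ (n + 1)` lies in `(ker φ) J ^ n`. -/
theorem IsMinimalReduction.pow_succ_notMem {A : Type*} [CommRing A] [IsNoetherianRing A]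
    {m J I : Ideal A} [m.IsMaximal] (hJ : IsMinimalReduction J I) (φ : J →ₗ[A] A ⧸ m) {y : J}
    (hy : φ y = 1) (n : ℕ) :
    (y : A) ^ (n + 1) ∉ (LinearMap.ker φ).map J.subtype * J ^ n := by
  intro h
  set J' : Ideal A := (LinearMap.ker φ).map J.subtype with hJ'
  have hle : J' ≤ J := by
    rintro _ ⟨w, -, rfl⟩
    exact w.2
  have hsup : J ≤ J' ⊔ Ideal.span {(y : A)} := by
    intro z hz
    obtain ⟨c, hc⟩ := Ideal.Quotient.mk_surjective (φ ⟨z, hz⟩)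
    have hker : (⟨z, hz⟩ : J) - c • y ∈ LinearMap.ker φ := by
      rw [LinearMap.mem_ker, map_sub, map_smul, hy, ← hc, sub_eq_zero, Algebra.smul_def, mul_one]
      rfl
    have : z = (z - c * y) + c * y := by ring
    rw [this]
    exact Submodule.add_mem_sup ⟨_, hker, rfl⟩
      (Ideal.mul_mem_left _ _ (Ideal.mem_span_singleton_self _))
  have hred := hJ.1.of_pow_succ_le hle (pow_succ_le_mul_of_le_sup_span hsup y.2 h)
  have hyJ' : (y : A) ∈ J' := (hJ.2 J' hred hle).symm ▸ y.2
  obtain ⟨w, hw, hwy⟩ := hyJ'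
  have : w = y := Subtype.ext hwy
  rw [this] at hw
  exact one_ne_zero (hy.symm.trans hw)

/-- The generators of `J` modulo `m J` are analytically independent. -/
theorem IsMinimalReduction.map_eq_zero_of_aeval_mem {A : Type*} [CommRing A] [IsNoetherianRing A]
    {m J I : Ideal A} [m.IsMaximal] [Infinite (A ⧸ m)] (hJ : IsMinimalReduction J I) {σ : Type*}
    {x : σ → J} (hx : ∀ v : σ → A ⧸ m, ∃ φ : J →ₗ[A] A ⧸ m, ∀ i, φ (x i) = v i)
    {g : MvPolynomial σ A} {n : ℕ} (hg : g.IsHomogeneous n)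
    (hmem : MvPolynomial.aeval (fun i => (x i : A)) g ∈ m * J ^ n) :
    MvPolynomial.map (Ideal.Quotient.mk m) g = 0 := by
  by_contra hne
  obtain ⟨v, hv⟩ : ∃ v, MvPolynomial.eval v (MvPolynomial.map (Ideal.Quotient.mk m) g) ≠ 0 := by
    by_contra! hall
    exact hne (MvPolynomial.funext fun v => by rw [hall v, map_zero])
  choose l hl using fun i => Ideal.Quotient.mk_surjective (v i)
  have hgl : Ideal.Quotient.mk m (MvPolynomial.eval l g) ≠ 0 := by
    have hvl : v = fun i => Ideal.Quotient.mk m (l i) := funext fun i => (hl i).symm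
    rwa [hvl, MvPolynomial.eval_map, ← Function.comp_def, ← MvPolynomial.eval₂_comp] at hv
  obtain ⟨u, hu⟩ := Ideal.Quotient.mk_surjective (Ideal.Quotient.mk m (MvPolynomial.eval l g))⁻¹
  have hu' : u * MvPolynomial.eval l g - 1 ∈ m := by
    rw [← Ideal.Quotient.eq_zero_iff_mem]
    simp [hu, hgl]
  obtain ⟨φ, hφ⟩ := hx v
  rcases n with _ | n
  · have hC := MvPolynomial.totalDegree_eq_zero_iff_eq_C.1 (Nat.le_zero.1 hg.totalDegree_le)
    rw [hC] at hgl hmem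
    refine hgl (Ideal.Quotient.eq_zero_iff_mem.2 ?_)
    simpa using hmem
  have hv0 : ∃ i, v i ≠ 0 := by
    by_contra! hall
    refine hv ?_
    rw [show v = 0 from funext hall, MvPolynomial.eval_zero, MvPolynomial.constantCoeff_eq]
    exact (hg.map _).coeff_eq_zero (by simp)
  obtain ⟨i, hi⟩ := hv0
  obtain ⟨c, hc⟩ := Ideal.Quotient.mk_surjective (v i)⁻¹
  have hsmul : ∀ (a : A) (w : A ⧸ m), a • w = Ideal.Quotient.mk m a * w := fun a w =>
    Algebra.smul_def a w
  have hy : φ (c • x i) = 1 := by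
    rw [map_smul, hφ, hsmul, hc, inv_mul_cancel₀ hi]
  set y := c • x i
  refine hJ.pow_succ_notMem φ hy n ?_
  set J' : Ideal A := (LinearMap.ker φ).map J.subtype with hJ'
  have hmJ : m * J ≤ J' := by
    refine Ideal.mul_le.2 fun r hr s hs => ⟨r • ⟨s, hs⟩, ?_, rfl⟩
    rw [SetLike.mem_coe, LinearMap.mem_ker, map_smul, hsmul, Ideal.Quotient.eq_zero_iff_mem.2 hr,
      zero_mul]
  have hmJn : m * J ^ (n + 1) ≤ J' * J ^ n := by
    rw [pow_succ', ← mul_assoc]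
    exact Ideal.mul_mono_left hmJ
  have hdiff : MvPolynomial.aeval (fun i => (x i : A)) g
      - MvPolynomial.aeval (fun i => l i * (y : A)) g ∈ J' * J ^ n := by
    refine aeval_sub_aeval_mem (fun i => (x i).2) (fun i => Ideal.mul_mem_left _ _ y.2)
      (fun i => ?_) hg
    refine ⟨x i - l i • y, ?_, rfl⟩
    rw [SetLike.mem_coe, LinearMap.mem_ker, map_sub, map_smul, hφ, hy, hsmul, hl, mul_one, sub_self]
  have hhom : MvPolynomial.aeval (fun i => l i * (y : A)) g
      = (y : A) ^ (n + 1) * MvPolynomial.eval l g := by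
    rw [MvPolynomial.aeval_def, MvPolynomial.eval₂_eq, MvPolynomial.eval_eq, Finset.mul_sum]
    refine Finset.sum_congr rfl fun d hd => ?_
    have hdeg : ∑ i ∈ d.support, d i = n + 1 := (hg.degree_eq_sum_deg_support hd).symm
    simp only [mul_pow, Finset.prod_mul_distrib, Finset.prod_pow_eq_pow_sum, hdeg,
      Algebra.algebraMap_self, RingHom.id_apply]
    ring
  rw [hhom] at hdiff
  have h1 : (y : A) ^ (n + 1) * MvPolynomial.eval l g ∈ J' * J ^ n := by
    have := sub_mem (hmJn hmem) hdiff
    simpa using this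
  have h2 : (u * MvPolynomial.eval l g - 1) * (y : A) ^ (n + 1) ∈ J' * J ^ n :=
    hmJn (Ideal.mul_mem_mul hu' (Ideal.pow_mem_pow y.2 _))
  have : (y : A) ^ (n + 1) = u * ((y : A) ^ (n + 1) * MvPolynomial.eval l g)
      - (u * MvPolynomial.eval l g - 1) * (y : A) ^ (n + 1) := by ring
  rw [this]
  exact sub_mem (Ideal.mul_mem_left _ _ h1) h2

universe u

/-- Elements of `J` forming a basis of `J / m J`. -/
theorem exists_basis_mod {A : Type u} [CommRing A] (m J : Ideal A) [m.IsMaximal] :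
    ∃ (σ : Type u) (x : σ → J),
      (∀ v : σ → A ⧸ m, ∃ φ : J →ₗ[A] A ⧸ m, ∀ i, φ (x i) = v i) ∧
      J ≤ Ideal.span (Set.range fun i => (x i : A)) ⊔ m * J := by
  let V := J ⧸ (m • ⊤ : Submodule A J)
  let B := Module.Basis.ofVectorSpace (A ⧸ m) V
  choose x hx using fun i => Submodule.mkQ_surjective (m • ⊤ : Submodule A J) (B i)
  refine ⟨Module.Basis.ofVectorSpaceIndex (A ⧸ m) V, x, fun v => ⟨((B.constr (A ⧸ m) v).restrictScalars A).comp
    (Submodule.mkQ (m • ⊤ : Submodule A J)), fun i => ?_⟩, ?_⟩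
  · rw [LinearMap.comp_apply, hx]
    exact B.constr_basis (A ⧸ m) v i
  · have hspan : ∀ w : V, w ∈ (Submodule.span A (Set.range x)).map
        (Submodule.mkQ (m • ⊤ : Submodule A J)) := by
      intro w
      have hw : w ∈ Submodule.span (A ⧸ m) (Set.range B) := B.mem_span w
      induction hw using Submodule.span_induction with
      | mem _ h =>
        obtain ⟨i, rfl⟩ := h
        exact ⟨x i, Submodule.subset_span ⟨i, rfl⟩, hx i⟩
      | zero => exact zero_mem _
      | add _ _ _ _ h1 h2 => exact add_mem h1 h2
      | smul c w _ h =>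
        obtain ⟨c, rfl⟩ := Ideal.Quotient.mk_surjective c
        exact Submodule.smul_mem _ c h
    intro z hz
    obtain ⟨w, hw, hwz⟩ := hspan (Submodule.mkQ (m • ⊤ : Submodule A J) ⟨z, hz⟩)
    have h1 : (⟨z, hz⟩ : J) - w ∈ (m • ⊤ : Submodule A J) := by
      rw [← Submodule.ker_mkQ (m • ⊤ : Submodule A J), LinearMap.mem_ker, map_sub, hwz, sub_self]
    have hmap : (m • (⊤ : Submodule A J)).map J.subtype = m * J := by
      rw [Submodule.map_smul'', Submodule.map_top, Submodule.range_subtype]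
      rfl
    have h2 : z - w ∈ m * J := by
      rw [← hmap]
      exact ⟨_, h1, rfl⟩
    have h3 : (w : A) ∈ Ideal.span (Set.range fun i => (x i : A)) := by
      have : (w : A) ∈ (Submodule.span A (Set.range x)).map J.subtype := ⟨w, hw, rfl⟩
      rw [Submodule.map_span, ← Set.range_comp] at this
      exact this
    rw [show z = w + (z - w) by ring]
    exact Submodule.add_mem_sup h3 h2

/-- The extension of `m` to the Rees algebra of `L`. -/
def reesFiberIdeal {A : Type*} [CommRing A] (m L : Ideal A) : Ideal (reesAlgebra L) where
  carrier := {p | ∀ n, (p : A[X]).coeff n ∈ m * L ^ n}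
  add_mem' hp hq n := by
    rw [Subalgebra.coe_add, Polynomial.coeff_add]
    exact add_mem (hp n) (hq n)
  zero_mem' n := by simp
  smul_mem' c p hp n := by
    rw [smul_eq_mul, Subalgebra.coe_mul, Polynomial.coeff_mul]
    refine Ideal.sum_mem _ fun ij hij => ?_
    have := Ideal.mul_mem_mul (c.2 ij.1) (hp ij.2)
    rwa [mul_left_comm, ← pow_add, Finset.HasAntidiagonal.mem_antidiagonal.1 hij] at this

theorem mem_reesFiberIdeal {A : Type*} [CommRing A] {m L : Ideal A} {p : reesAlgebra L} :
    p ∈ reesFiberIdeal m L ↔ ∀ n, (p : A[X]).coeff n ∈ m * L ^ n := Iff.rfl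

/-- The fiber cone of `L` at `m`. -/
abbrev ReesFiber {A : Type*} [CommRing A] (m L : Ideal A) : Type _ :=
  reesAlgebra L ⧸ reesFiberIdeal m L

/-- The homogeneous element of degree `n` of the Rees algebra given by `a ∈ L ^ n`. -/
noncomputable def reesMonomial {A : Type*} [CommRing A] {L : Ideal A} (n : ℕ) (a : A)
    (ha : a ∈ L ^ n) : reesAlgebra L :=
  ⟨Polynomial.monomial n a, reesAlgebra.monomial_mem.2 ha⟩

/-- The evaluation `g ↦ g(x t)` in the Rees algebra. -/
noncomputable def reesEval {A σ : Type*} [CommRing A] {L : Ideal A} (x : σ → L) :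
    MvPolynomial σ A →ₐ[A] reesAlgebra L :=
  MvPolynomial.aeval fun i => reesMonomial 1 (x i) (by simp)

theorem coe_reesEval {A σ : Type*} [CommRing A] {L : Ideal A} (x : σ → L)
    (g : MvPolynomial σ A) : (reesEval x g : A[X])
      = MvPolynomial.aeval (fun i => Polynomial.monomial 1 (x i : A)) g := by
  have := MvPolynomial.comp_aeval_apply (fun i => reesMonomial 1 (x i : A) (by simp))
    (reesAlgebra L).val g
  exact this

/-- The evaluation `g ↦ g(x t)` in the fiber cone. -/
noncomputable def fiberEval {A σ : Type*} [CommRing A] (m : Ideal A) {L : Ideal A} (x : σ → L) :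
    MvPolynomial σ (A ⧸ m) →+* ReesFiber m L :=
  MvPolynomial.eval₂Hom
    (Ideal.Quotient.lift m ((Ideal.Quotient.mk (reesFiberIdeal m L)).comp
      (algebraMap A (reesAlgebra L))) fun a ha => by
        rw [RingHom.comp_apply, Ideal.Quotient.eq_zero_iff_mem, mem_reesFiberIdeal]
        intro n
        rw [Subalgebra.coe_algebraMap, Polynomial.algebraMap_apply, Algebra.algebraMap_self,
          RingHom.id_apply, Polynomial.coeff_C]
        split_ifs with h
        · simpa [h] using ha
        · exact zero_mem _)
    fun i => Ideal.Quotient.mk (reesFiberIdeal m L) (reesMonomial 1 (x i : A) (by simp))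

theorem fiberEval_map {A σ : Type*} [CommRing A] (m : Ideal A) {L : Ideal A} (x : σ → L)
    (g : MvPolynomial σ A) :
    fiberEval m x (MvPolynomial.map (Ideal.Quotient.mk m) g)
      = Ideal.Quotient.mk _ (reesEval x g) := by
  have : (fiberEval m x).comp (MvPolynomial.map (Ideal.Quotient.mk m))
      = (Ideal.Quotient.mk _).comp (reesEval x).toRingHom := by
    refine MvPolynomial.ringHom_ext (fun r => ?_) fun i => ?_
    · simp [fiberEval]
    · simp [fiberEval, reesEval]
  exact RingHom.congr_fun this g

/-- If `J ≤ L` and `L ^ (n + r) ≤ J ^ n` for all `n`, where `J` is a minimal reduction, the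
polynomial ring on a basis of `J / m J` embeds into the fiber cone of `L`. -/
theorem IsMinimalReduction.fiberEval_injective {A : Type*} [CommRing A] [IsNoetherianRing A]
    {m J I L : Ideal A} [m.IsMaximal] [Infinite (A ⧸ m)] (hJ : IsMinimalReduction J I)
    {σ : Type*} {x : σ → J} (hx : ∀ v : σ → A ⧸ m, ∃ φ : J →ₗ[A] A ⧸ m, ∀ i, φ (x i) = v i)
    (hJL : J ≤ L) {r : ℕ} (hr : ∀ n, L ^ (n + r) ≤ J ^ n) {e : ℕ} (he : m ^ e ≤ J) :
    Function.Injective (fiberEval m fun i => (⟨x i, hJL (x i).2⟩ : L)) := by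
  refine (injective_iff_map_eq_zero _).2 fun f hf => ?_
  obtain ⟨g, rfl⟩ := MvPolynomial.map_surjective _ Ideal.Quotient.mk_surjective f
  rw [fiberEval_map, Ideal.Quotient.eq_zero_iff_mem, mem_reesFiberIdeal] at hf
  have hcomp : ∀ n, MvPolynomial.map (Ideal.Quotient.mk m)
      (MvPolynomial.homogeneousComponent n g) = 0 := by
    intro n
    have hn := hf n
    rw [coe_reesEval, coeff_aeval_monomial_one] at hn
    have hhom := MvPolynomial.homogeneousComponent_isHomogeneous n g
    set h := MvPolynomial.homogeneousComponent n g
    have hpow : MvPolynomial.aeval (fun i => (x i : A)) (h ^ (e * r + 1))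
        ∈ m * J ^ (n * (e * r + 1)) := by
      rw [map_pow]
      have h1 := Ideal.pow_mem_pow hn (e * r + 1)
      refine (?_ : (m * L ^ n) ^ (e * r + 1) ≤ _) h1
      calc (m * L ^ n) ^ (e * r + 1) = m * ((m ^ e) ^ r * L ^ (n * (e * r + 1))) := by
            rw [mul_pow, ← pow_mul, ← pow_mul]; ring
        _ ≤ m * (L ^ r * L ^ (n * (e * r + 1))) :=
            Ideal.mul_mono_right (Ideal.mul_mono_left (Ideal.pow_right_mono (he.trans hJL) r))
        _ = m * L ^ (n * (e * r + 1) + r) := by rw [← pow_add, add_comm]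
        _ ≤ m * J ^ (n * (e * r + 1)) := Ideal.mul_mono_right (hr _)
    have := hJ.map_eq_zero_of_aeval_mem hx (hhom.pow _) hpow
    rw [map_pow] at this
    exact eq_zero_of_pow_eq_zero this
  rw [← MvPolynomial.sum_homogeneousComponent g, map_sum]
  exact Finset.sum_eq_zero fun n _ => hcomp n

/-- The degree `n` part of the subalgebra generated by `J` in the fiber cone comes from the
polynomial ring. -/
theorem mk_reesMonomial_mem_range {A σ : Type*} [CommRing A] {m J L : Ideal A} (hJL : J ≤ L)
    {x : σ → J} (hspan : J ≤ Ideal.span (Set.range fun i => (x i : A)) ⊔ m * J) {n : ℕ} {a : A}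
    (ha : a ∈ J ^ n) :
    Ideal.Quotient.mk (reesFiberIdeal m L) (reesMonomial n a (Ideal.pow_right_mono hJL n ha))
      ∈ (fiberEval m fun i => (⟨x i, hJL (x i).2⟩ : L)).range := by
  set ψ := fiberEval m fun i => (⟨x i, hJL (x i).2⟩ : L) with hψ
  have hC : ∀ c : A, Ideal.Quotient.mk (reesFiberIdeal m L) (algebraMap A _ c) ∈ ψ.range := by
    intro c
    refine ⟨MvPolynomial.map (Ideal.Quotient.mk m) (MvPolynomial.C c), ?_⟩
    rw [hψ, fiberEval_map]
    congr 1
    exact (reesEval _).commutes c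
  let T : ℕ → Ideal A := fun n =>
    { carrier := {a | ∃ h : a ∈ L ^ n,
        Ideal.Quotient.mk (reesFiberIdeal m L) (reesMonomial n a h) ∈ ψ.range}
      add_mem' := by
        rintro a b ⟨ha, ha'⟩ ⟨hb, hb'⟩
        refine ⟨add_mem ha hb, ?_⟩
        have : reesMonomial n (a + b) (add_mem ha hb) = reesMonomial n a ha + reesMonomial n b hb :=
          Subtype.ext (map_add (Polynomial.monomial n) a b)
        rw [this, map_add]
        exact add_mem ha' hb'
      zero_mem' := by
        refine ⟨zero_mem _, ?_⟩
        have : reesMonomial n (0 : A) (zero_mem (L ^ n)) = 0 :=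
          Subtype.ext (map_zero (Polynomial.monomial n))
        rw [this, map_zero]
        exact zero_mem _
      smul_mem' := by
        rintro c a ⟨ha, ha'⟩
        refine ⟨Ideal.mul_mem_left _ c ha, ?_⟩
        have : reesMonomial n (c • a) (Ideal.mul_mem_left _ c ha)
            = algebraMap A _ c * reesMonomial n a ha :=
          Subtype.ext (by simp [reesMonomial, Polynomial.C_mul_monomial])
        rw [this, map_mul]
        exact mul_mem (hC c) ha' }
  have hTmul : ∀ p q, T p * T q ≤ T (p + q) := by
    intro p q
    refine Ideal.mul_le.2 ?_
    rintro a ⟨ha, ha'⟩ b ⟨hb, hb'⟩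
    have hab : a * b ∈ L ^ (p + q) := by
      rw [pow_add]; exact Ideal.mul_mem_mul ha hb
    refine ⟨hab, ?_⟩
    have : reesMonomial (p + q) (a * b) hab = reesMonomial p a ha * reesMonomial q b hb :=
      Subtype.ext (Polynomial.monomial_mul_monomial p q a b).symm
    rw [this, map_mul]
    exact mul_mem ha' hb'
  have hT0 : T 0 = ⊤ := by
    refine (Ideal.eq_top_iff_one _).2 ⟨by simp, ?_⟩
    have : reesMonomial 0 (1 : A) (by simp) = (1 : reesAlgebra L) := Subtype.ext rfl
    rw [this, map_one]
    exact one_mem _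
  have hT1 : J ≤ T 1 := by
    refine hspan.trans (sup_le (Ideal.span_le.2 ?_) fun a ha => ?_)
    · rintro _ ⟨i, rfl⟩
      refine ⟨by simpa using hJL (x i).2, MvPolynomial.X i, ?_⟩
      rw [hψ, fiberEval, MvPolynomial.eval₂Hom_X']
    · have haL : a ∈ m * L ^ 1 := by
        rw [pow_one]; exact Ideal.mul_mono_right hJL ha
      refine ⟨Ideal.mul_le_right haL, ?_⟩
      have : Ideal.Quotient.mk (reesFiberIdeal m L) (reesMonomial 1 a (Ideal.mul_le_right haL))
          = 0 := by
        rw [Ideal.Quotient.eq_zero_iff_mem, mem_reesFiberIdeal]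
        intro k
        rw [reesMonomial, Polynomial.coeff_monomial]
        split_ifs with h
        · exact h ▸ haL
        · exact zero_mem _
      rw [this]
      exact zero_mem _
  have hTn : ∀ n, J ^ n ≤ T n := by
    intro n
    induction n with
    | zero => rw [hT0]; exact le_top
    | succ n ih =>
      rw [pow_succ]
      exact (Ideal.mul_mono ih hT1).trans (hTmul n 1)
  exact (hTn n ha).2

/-- If `b t - g(x t)` is nilpotent in the fiber cone, then so is its degree one part. -/
theorem exists_pow_mem_of_isNilpotent {A σ : Type*} [CommRing A] {m J L : Ideal A} [m.IsPrime]
    (hJL : J ≤ L) {x : σ → J} {b : A} (hb : b ∈ L ^ 1) {s : MvPolynomial σ (A ⧸ m)}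
    (hs : IsNilpotent (Ideal.Quotient.mk (reesFiberIdeal m L) (reesMonomial 1 b hb)
      - fiberEval m (fun i => (⟨x i, hJL (x i).2⟩ : L)) s)) :
    ∃ j ∈ J, ∃ N : ℕ, (b - j) ^ N ∈ m * L ^ N := by
  obtain ⟨g, rfl⟩ := MvPolynomial.map_surjective _ Ideal.Quotient.mk_surjective s
  rw [fiberEval_map, ← map_sub] at hs
  set p : reesAlgebra L := reesMonomial 1 b hb
    - reesEval (fun i => (⟨x i, hJL (x i).2⟩ : L)) g with hp
  obtain ⟨N, hN⟩ := hs
  have hN' := hN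
  rw [← map_pow, Ideal.Quotient.eq_zero_iff_mem, mem_reesFiberIdeal] at hN
  have hc : (p : A[X]).coeff 0 ∈ m := by
    have h0 := hN 0
    rw [pow_zero, mul_one, Subalgebra.coe_pow, Polynomial.coeff_zero_eq_eval_zero,
      Polynomial.eval_pow, ← Polynomial.coeff_zero_eq_eval_zero] at h0
    exact Ideal.IsPrime.mem_of_pow_mem inferInstance _ h0
  set c := (p : A[X]).coeff 0
  have hpc : Ideal.Quotient.mk (reesFiberIdeal m L) (p - algebraMap A _ c)
      = Ideal.Quotient.mk _ p := by
    rw [Ideal.Quotient.eq, sub_sub_cancel_left, neg_mem_iff, mem_reesFiberIdeal]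
    intro n
    rw [Subalgebra.coe_algebraMap, Polynomial.algebraMap_apply, Algebra.algebraMap_self,
      RingHom.id_apply, Polynomial.coeff_C]
    split_ifs with h
    · simpa [h] using hc
    · exact zero_mem _
  rw [← hpc, ← map_pow, Ideal.Quotient.eq_zero_iff_mem, mem_reesFiberIdeal] at hN'
  have hcoe : ((p - algebraMap A _ c : reesAlgebra L) : A[X]) = X * (p : A[X]).divX := by
    have h := Polynomial.X_mul_divX_add (p : A[X])
    rw [AddSubgroupClass.coe_sub]
    exact sub_eq_of_eq_add h.symm
  have hNN := hN' N
  rw [Subalgebra.coe_pow, hcoe, mul_pow, Polynomial.coeff_X_pow_mul', if_pos le_rfl, Nat.sub_self,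
    Polynomial.coeff_zero_eq_eval_zero, Polynomial.eval_pow,
    ← Polynomial.coeff_zero_eq_eval_zero, Polynomial.coeff_divX] at hNN
  refine ⟨(reesEval x g : A[X]).coeff 1, by simpa using (reesEval x g).2 1, N, ?_⟩
  convert hNN using 2
  rw [hp, AddSubgroupClass.coe_sub, Polynomial.coeff_sub, coe_reesEval, coe_reesEval]
  simp [reesMonomial]

/-- If some power of `c` lies in `m L ^ N`, where `m` is nilpotent modulo `J` and `L` is integral
over `J ≤ I`, then `c ∈ I_>`. -/
theorem memIgt_of_pow_mem_mul {A : Type*} [CommRing A] {m J I L : Ideal A} (hJI : J ≤ I)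
    (hJL : J ≤ L) {r : ℕ} (hr : ∀ n, L ^ (n + r) ≤ J ^ n) {e : ℕ} (he : m ^ e ≤ J) {c : A}
    (hcL : c ∈ L) {N : ℕ} (hN : c ^ N ∈ m * L ^ N) : MemIgt I c := by
  have h1 : c ^ (N + 1) ∈ m * L ^ (N + 1) := by
    rw [pow_succ, pow_succ, ← mul_assoc]
    exact Ideal.mul_mem_mul hN hcL
  have h2 : c ^ ((N + 1) * (e + 1)) ∈ L ^ ((N + 1) * (e + 1) + 1) := by
    rw [pow_mul]
    refine (?_ : (m * L ^ (N + 1)) ^ (e + 1) ≤ _) (Ideal.pow_mem_pow h1 (e + 1))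
    rw [mul_pow, ← pow_mul, pow_succ' L ((N + 1) * (e + 1))]
    refine Ideal.mul_mono_left ?_
    rw [pow_succ]
    exact Ideal.mul_le_left.trans (he.trans hJL)
  set P := (N + 1) * (e + 1) with hP
  have hP0 : 0 < P := by positivity
  refine memIgt_of_pow_mem (P := P * (r + 1)) (by positivity) ?_
  rw [pow_mul]
  refine (?_ : (L ^ (P + 1)) ^ (r + 1) ≤ _) (Ideal.pow_mem_pow h2 (r + 1))
  rw [← pow_mul, show (P + 1) * (r + 1) = P * (r + 1) + 1 + r by ring]
  exact (hr _).trans (Ideal.pow_right_mono hJI _)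

theorem IsReduction.integralOverIdeal {A : Type*} [CommRing A] {J I : Ideal A}
    (hJ : IsReduction J I) {x : A} (hx : x ∈ I) : IntegralOverIdeal J x :=
  (hJ.2 x).2 (integralOverIdeal_of_mem hx)

theorem IsReduction.exists_pow_add_le {A : Type*} [CommRing A] [IsNoetherianRing A]
    {J I : Ideal A} (hJ : IsReduction J I) : ∃ r : ℕ, ∀ n, I ^ (n + r) ≤ J ^ n := by
  obtain ⟨r, hr⟩ := exists_sup_pow_add_le (IsNoetherian.noetherian I)
    fun x hx => hJ.integralOverIdeal hx
  exact ⟨r, fun n => (Ideal.pow_right_mono le_sup_right _).trans (hr n)⟩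

/-- The inclusion `*J ⊆ J + I_>` for a minimal reduction `J`. -/
theorem IsMinimalReduction.exists_memIgt_sub {A : Type*} [CommRing A] [IsNoetherianRing A]
    {m : Ideal A} [m.IsMaximal] [CharZero (A ⧸ m)] {I J : Ideal A} (hI : I.radical = m)
    (hJ : IsMinimalReduction J I) {b : A} (hb : WSubIdeal J b) :
    ∃ j ∈ J, MemIgt I (b - j) := by
  set L := J ⊔ Ideal.span {b} with hL
  have hJL : J ≤ L := le_sup_left
  have hbL : b ∈ L := Ideal.mem_sup_right (Ideal.mem_span_singleton_self b)
  obtain ⟨r, hr⟩ : ∃ r : ℕ, ∀ n, L ^ (n + r) ≤ J ^ n := by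
    obtain ⟨r, hr⟩ := hb.integralOverIdeal.exists_pow_succ_le
    exact ⟨r, fun n => (pow_add_le_of_pow_succ_le hr n).trans Ideal.mul_le_left⟩
  obtain ⟨e, he⟩ : ∃ e, m ^ e ≤ J := by
    obtain ⟨k, hk⟩ := Ideal.exists_radical_pow_le_of_fg I (IsNoetherian.noetherian _)
    obtain ⟨t, ht⟩ := hJ.1.exists_pow_add_le
    refine ⟨k * (1 + t), ?_⟩
    rw [pow_mul, ← hI]
    exact (Ideal.pow_right_mono hk _).trans ((ht 1).trans (pow_one J).le)
  obtain ⟨σ, x, hx, hspan⟩ := exists_basis_mod m J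
  have : Infinite (A ⧸ m) := CharZero.infinite _
  have hinj := hJ.fiberEval_injective hx hJL hr he
  obtain ⟨q, a, ha, heq⟩ := hb
  have hbL1 : b ∈ L ^ 1 := by rwa [pow_one]
  have hα : ∀ i, ∃ α, fiberEval m (fun i => (⟨x i, hJL (x i).2⟩ : L)) α
      = Ideal.Quotient.mk (reesFiberIdeal m L)
        (reesMonomial i (a i) (Ideal.pow_right_mono hJL i (ha i))) :=
    fun i => mk_reesMonomial_mem_range hJL hspan (ha i)
  choose α hα using hα
  let α' : ℕ → MvPolynomial σ (A ⧸ m) := fun i => if i = 0 then 1 else α i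
  obtain ⟨s, hs⟩ := exists_isNilpotent_sub
    (fiberEval m fun i => (⟨x i, hJL (x i).2⟩ : L)) hinj (a := α') (if_pos rfl)
    (b := Ideal.Quotient.mk (reesFiberIdeal m L) (reesMonomial 1 b hbL1)) (q := q) (by
      intro n h1 h2
      have hzero : reesMonomial 1 b hbL1 ^ n + ∑ i ∈ Finset.Icc 1 n, (n.choose i : reesAlgebra L) *
          reesMonomial i (a i) (Ideal.pow_right_mono hJL i (ha i)) *
          reesMonomial 1 b hbL1 ^ (n - i) = 0 := by
        refine Subtype.ext ?_
        have hmon := congrArg (Polynomial.monomial n) (heq n h1 h2)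
        rw [map_add, map_sum, map_zero] at hmon
        push_cast
        rw [← hmon]
        congr 1
        · simp [reesMonomial, Polynomial.monomial_pow]
        · refine Finset.sum_congr rfl fun i hi => ?_
          have hin := (Finset.mem_Icc.1 hi).2
          rw [reesMonomial, reesMonomial, Polynomial.monomial_pow, mul_assoc,
            Polynomial.monomial_mul_monomial, one_mul, Nat.add_sub_cancel' hin,
            ← Polynomial.C_eq_natCast, Polynomial.C_mul_monomial, mul_assoc]
      have hmk := congrArg (Ideal.Quotient.mk (reesFiberIdeal m L)) hzero
      rw [map_add, map_sum, map_zero, map_pow] at hmk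
      rw [appell, Polynomial.eval_finsetSum, Finset.range_eq_Ico,
        Finset.sum_eq_sum_Ico_succ_bot (by omega), ← hmk]
      congr 1
      · simp [α']
      · refine Finset.sum_congr (by ext; simp) fun i hi => ?_
        have hi0 : i ≠ 0 := by have := (Finset.mem_Icc.1 hi).1; omega
        simp [α', hi0, hα])
  obtain ⟨j, hj, N, hN⟩ := exists_pow_mem_of_isNilpotent hJL hbL1 hs
  exact ⟨j, hj, memIgt_of_pow_mem_mul hJ.1.1 hJL hr he (sub_mem hbL (hJL hj)) hN⟩

/-- Corollary to Theorem 4.8: let `A` be a Noetherian ring and `m` a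
maximal ideal with `A/m` algebraically closed of characteristic 0.  If `I` is `m`-primary
(i.e. `rad I = m`) and `J` is a minimal reduction of `I`, then `J + I_> = *J`.
Here `K` is the ideal `I_>` (hypothesis `hK`). -/
theorem weakSubintegralClosure_of_minimalReduction' {A : Type*} [CommRing A]
    [IsNoetherianRing A] (m : Ideal A) [m.IsMaximal]
    [IsAlgClosed (A ⧸ m)] [CharZero (A ⧸ m)]
    (I : Ideal A) (hI : I.radical = m)
    (J : Ideal A) (hJ : IsMinimalReduction J I)
    (K : Ideal A) (hK : ∀ x : A, x ∈ K ↔ MemIgt I x) :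
    ∀ x : A, x ∈ J + K ↔ WSubIdeal J x := by
  intro x
  constructor
  · intro hx
    obtain ⟨j, hj, c, hc, rfl⟩ := Submodule.mem_sup.1 hx
    obtain ⟨r, hr⟩ := hJ.1.exists_pow_add_le
    obtain ⟨q, hq⟩ := ((hK c).1 hc).exists_pow_mem r
    exact wSubIdeal_add_of_pow_mem hj fun n hn => hr n (hq n hn)
  · intro hx
    obtain ⟨j, hj, hjK⟩ := hJ.exists_memIgt_sub hI hx
    rw [← add_sub_cancel j x]
    exact Submodule.add_mem_sup hj ((hK _).2 hjK)
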